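/- Baker–Akhiezer function (Theorem 3). The function Ψ_BA(x, ξ) := (∑_{ν=0}^{k_m} 2^{−ν} U_ν(x, ξ)) · e^{⟨x, ξ⟩}, where ⟨x, ξ⟩ = x₁ξ₁ + x₂ξ₂ is the Euclidean inner product on ℝ², satisfies the eigenfunction equation −Δ_x Ψ_BA(x, ξ) + V_k(x)·Ψ_BA(x, ξ) = −|ξ|²·Ψ_BA(x, ξ) at all points x = (r cos φ, r sin φ), ξ = (ρ cos ϕ, ρ sin ϕ) with r > 0, ρ > 0, W(φ) ≠ 0 and W(ϕ) ≠ 0, where Δ_x is the Laplacian in the variable x. -/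

import Mathlib

/-- The Wronskian of a family of `n` real functions: the determinant of the
`n × n` matrix whose `(i, j)`-entry is the `j`-th derivative of the `i`-th function. -/
noncomputable def wronsk {n : ℕ} (f : Fin n → ℝ → ℝ) (t : ℝ) : ℝ :=
  (Matrix.of fun i j : Fin n => iteratedDeriv (j : ℕ) (f i) t).det

/-- The functions `χ_i(φ) = cos(k_i φ + θ_i)`. -/
noncomputable def chiF (m : ℕ) (k : Fin (m + 1) → ℤ) (θ : Fin (m + 1) → ℝ)
    (i : Fin (m + 1)) : ℝ → ℝ :=
  fun φ => Real.cos ((k i : ℝ) * φ + θ i)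

/-- `W(φ) = Wr[χ_0, …, χ_m](φ)`. -/
noncomputable def Wfn (m : ℕ) (k : Fin (m + 1) → ℤ) (θ : Fin (m + 1) → ℝ) : ℝ → ℝ :=
  wronsk (chiF m k θ)

/-- `Ψ_i(φ) = Wr[χ_0, …, χ_{i-1}, χ_{i+1}, …, χ_m](φ) / W(φ)`. -/
noncomputable def PsiF (m : ℕ) (k : Fin (m + 1) → ℤ) (θ : Fin (m + 1) → ℝ)
    (i : Fin (m + 1)) : ℝ → ℝ :=
  fun φ => wronsk (fun j : Fin m => chiF m k θ (i.succAbove j)) φ / Wfn m k θ φ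

/-- `c_i = ∏_{j ≠ i} (k_i² − k_j²)`. -/
noncomputable def cF (m : ℕ) (k : Fin (m + 1) → ℤ) (i : Fin (m + 1)) : ℝ :=
  ∏ j ∈ Finset.univ.erase i, ((k i : ℝ) ^ 2 - (k j : ℝ) ^ 2)

/-- The Hadamard coefficients `U_ν` in polar coordinates:
`U_ν = ((−2)^ν/(rρ)^ν) ∑_i c_i Ψ_i(φ) Ψ_i(ϕ) T_{k_i}^{(ν)}(cos(φ − ϕ))`. -/
noncomputable def Ucoef (m : ℕ) (k : Fin (m + 1) → ℤ) (θ : Fin (m + 1) → ℝ)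
    (ν : ℕ) (r φ ρ ϕ : ℝ) : ℝ :=
  ((-2 : ℝ) ^ ν / (r * ρ) ^ ν) *
    ∑ i, cF m k i * PsiF m k θ i φ * PsiF m k θ i ϕ *
      (Polynomial.derivative^[ν] (Polynomial.Chebyshev.T ℝ (k i))).eval (Real.cos (φ - ϕ))

/-- The potential `V_k` in polar coordinates: `V_k = −(2/r²)·(d²/dφ²) log W(φ)`. -/
noncomputable def Vpot (m : ℕ) (k : Fin (m + 1) → ℤ) (θ : Fin (m + 1) → ℝ)
    (r φ : ℝ) : ℝ :=
  -(2 / r ^ 2) * deriv (deriv fun t => Real.log (Wfn m k θ t)) φ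

/-- First partial derivative in the first variable. -/
noncomputable def pdx (f : ℝ × ℝ → ℝ) (x : ℝ × ℝ) : ℝ := deriv (fun s => f (s, x.2)) x.1

/-- First partial derivative in the second variable. -/
noncomputable def pdy (f : ℝ × ℝ → ℝ) (x : ℝ × ℝ) : ℝ := deriv (fun s => f (x.1, s)) x.2

/-- The Laplacian on `ℝ²`. -/
noncomputable def lap2 (f : ℝ × ℝ → ℝ) (x : ℝ × ℝ) : ℝ := pdx (pdx f) x + pdy (pdy f) x

/-! With suitable signs, the functions `ψ_i = ±Ψ_i` form the last row of the inverse Wronskian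
matrix of the `χ_i`, that is `∑ ψ_i χ_i^{(j)} = δ_{jm}` for `j ≤ m`. Differentiating these relations
twice gives Crum's theorem: `ψ_i'' = (-k_i² - 2 (log W)'') ψ_i`.

Writing the `χ_i` as combinations of `e^{±i(k_i φ + θ_i)}` turns the same relations into moment
conditions at the `2m + 1` nodes `0, ±i k_j`, and Lagrange interpolation at these nodes yields the
kernel identity `∑ c_i ψ_i(φ) ψ_i(ϕ) cos k_i(φ - ϕ) = 1`.

The coefficients `U_ν` are arranged so that `Ψ_BA` is a sum over `i` of terms
`c_i ψ_i(φ) ψ_i(ϕ) F_i(r, φ)`, where `F_i = ∑_ν (-1/(ρr))^ν T_{k_i}^{(ν)}(cos(φ - ϕ)) e^{⟨x, ξ⟩}` is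
`ρr` times a primitive of `T_{k_i}(u) e^{ρru}` at `u = cos(φ - ϕ)`. By Chebyshev's differential
equation and Crum's theorem each term satisfies `Δ G = (ρ² + V_k) G` up to an error, and the errors
add up to a multiple of the `φ`-derivative of the kernel identity, hence cancel. -/

open Filter Topology

section Polar

theorem deriv_deriv_comp_curve {𝕜 E F : Type*} [NontriviallyNormedField 𝕜]
    [NormedAddCommGroup E] [NormedSpace 𝕜 E] [NormedAddCommGroup F] [NormedSpace 𝕜 F]
    {f : E → F} {γ γ' : 𝕜 → E} {γ'' : E} {t : 𝕜} (hf : ContDiffAt 𝕜 2 f (γ t))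
    (hγ : ∀ᶠ s in 𝓝 t, HasDerivAt γ (γ' s) s) (hγ' : HasDerivAt γ' γ'' t) :
    deriv (deriv (f ∘ γ)) t =
      fderiv 𝕜 (fderiv 𝕜 f) (γ t) (γ' t) (γ' t) + fderiv 𝕜 f (γ t) γ'' := by
  have hfirst : deriv (f ∘ γ) =ᶠ[𝓝 t] fun s => fderiv 𝕜 f (γ s) (γ' s) := by
    filter_upwards [hγ, hγ.self_of_nhds.continuousAt.eventually (hf.eventually (by simp))]
      with s hs hfs
    exact ((hfs.differentiableAt (by simp)).hasFDerivAt.comp_hasDerivAt s hs).deriv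
  have hfderiv : DifferentiableAt 𝕜 (fderiv 𝕜 f) (γ t) :=
    (hf.fderiv_right (m := 1) (by norm_num)).differentiableAt (by simp)
  rw [hfirst.deriv_eq]
  exact ((hfderiv.hasFDerivAt.comp_hasDerivAt t hγ.self_of_nhds).clm_apply hγ').deriv

theorem contDiffAt_of_comp_of_hasFDerivAt_equiv {𝕜 E F G : Type*} [RCLike 𝕜]
    [NormedAddCommGroup E] [NormedSpace 𝕜 E] [CompleteSpace E]
    [NormedAddCommGroup F] [NormedSpace 𝕜 F] [NormedAddCommGroup G] [NormedSpace 𝕜 G]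
    {f : F → G} {P : E → F} {P' : E ≃L[𝕜] F} {x : E} {n : WithTop ℕ∞} (hn : n ≠ 0)
    (hP : ContDiffAt 𝕜 n P x) (hP' : HasFDerivAt P (P' : E →L[𝕜] F) x)
    (hf : ContDiffAt 𝕜 n (f ∘ P) x) : ContDiffAt 𝕜 n f (P x) := by
  have hinv : ContDiffAt 𝕜 n (hP.localInverse hP' hn) (P x) := hP.to_localInverse hP' hn
  have hfix : hP.localInverse hP' hn (P x) = x := hP.localInverse_apply_image hP' hn
  have hright : ∀ᶠ y in 𝓝 (P x), P (hP.localInverse hP' hn y) = y :=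
    (hP.hasStrictFDerivAt' hP' hn).eventually_right_inverse
  have hcomp : ContDiffAt 𝕜 n ((f ∘ P) ∘ hP.localInverse hP' hn) (P x) :=
    (hfix.symm ▸ hf).comp (P x) hinv
  exact hcomp.congr_of_eventuallyEq (hright.mono fun y hy => by simp [hy])

theorem contDiffAt_of_comp_polarCoord_symm {f : ℝ × ℝ → ℝ} {n : WithTop ℕ∞} (hn : n ≠ 0)
    {p : ℝ × ℝ} (hp : p.1 ≠ 0) (hf : ContDiffAt ℝ n (f ∘ polarCoord.symm) p) :
    ContDiffAt ℝ n f (polarCoord.symm p) := by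
  have hsmooth : ContDiffAt ℝ n (fun q : ℝ × ℝ => (q.1 * Real.cos q.2, q.1 * Real.sin q.2)) p := by
    fun_prop
  have hdet : (fderivPolarCoordSymm p).det ≠ 0 := by rwa [det_fderivPolarCoordSymm]
  exact contDiffAt_of_comp_of_hasFDerivAt_equiv hn hsmooth
    (P' := (fderivPolarCoordSymm p).toContinuousLinearEquivOfDetNeZero hdet)
    (hasFDerivAt_polarCoord_symm p) hf

/-- The Laplacian of `ℝ²` in polar coordinates, acting on functions of the pair `(r, φ)`. -/
noncomputable def polarLap (G : ℝ × ℝ → ℝ) (p : ℝ × ℝ) : ℝ :=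
  pdx (pdx G) p + pdx G p / p.1 + pdy (pdy G) p / p.1 ^ 2

theorem lap2_eq_fderiv {f : ℝ × ℝ → ℝ} {x : ℝ × ℝ} (hf : ContDiffAt ℝ 2 f x) :
    lap2 f x = fderiv ℝ (fderiv ℝ f) x (1, 0) (1, 0) + fderiv ℝ (fderiv ℝ f) x (0, 1) (0, 1) := by
  have hx : pdx (pdx f) x = _ :=
    deriv_deriv_comp_curve (γ := fun s => (s, x.2)) (γ' := fun _ => (1, 0)) hf
      (.of_forall fun s => (hasDerivAt_id s).prodMk (hasDerivAt_const s x.2)) (hasDerivAt_const _ _)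
  have hy : pdy (pdy f) x = _ :=
    deriv_deriv_comp_curve (γ := fun s => (x.1, s)) (γ' := fun _ => (0, 1)) hf
      (.of_forall fun s => (hasDerivAt_const s x.1).prodMk (hasDerivAt_id s)) (hasDerivAt_const _ _)
  rw [lap2, hx, hy, map_zero, add_zero, add_zero]

theorem polarLap_comp_polarCoord_symm {f : ℝ × ℝ → ℝ} {p : ℝ × ℝ} (hp : p.1 ≠ 0)
    (hf : ContDiffAt ℝ 2 f (polarCoord.symm p)) :
    polarLap (f ∘ polarCoord.symm) p = lap2 f (polarCoord.symm p) := by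
  obtain ⟨r, φ⟩ := p
  simp only [polarCoord_symm_apply] at hf hp ⊢
  have hray : ∀ s, HasDerivAt (fun s => (s * Real.cos φ, s * Real.sin φ))
      (Real.cos φ, Real.sin φ) s := fun s => by
    simpa using ((hasDerivAt_id s).mul_const (Real.cos φ)).prodMk
      ((hasDerivAt_id s).mul_const (Real.sin φ))
  have hcircle : ∀ s, HasDerivAt (fun s => (r * Real.cos s, r * Real.sin s))
      (r * -Real.sin s, r * Real.cos s) s := fun s =>
    ((Real.hasDerivAt_cos s).const_mul r).prodMk ((Real.hasDerivAt_sin s).const_mul r)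
  have hcircle' : HasDerivAt (fun s => (r * -Real.sin s, r * Real.cos s))
      (r * -Real.cos φ, r * -Real.sin φ) φ :=
    ((Real.hasDerivAt_sin φ).neg.const_mul r).prodMk ((Real.hasDerivAt_cos φ).const_mul r)
  have hr : pdx (f ∘ polarCoord.symm) (r, φ) = _ :=
    ((hf.differentiableAt two_ne_zero).hasFDerivAt.comp_hasDerivAt r (hray r)).deriv
  have hrr : pdx (pdx (f ∘ polarCoord.symm)) (r, φ) = _ :=
    deriv_deriv_comp_curve (γ := fun s => (s * Real.cos φ, s * Real.sin φ)) hf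
      (.of_forall hray) (hasDerivAt_const _ _)
  have hφφ : pdy (pdy (f ∘ polarCoord.symm)) (r, φ) = _ :=
    deriv_deriv_comp_curve (γ := fun s => (r * Real.cos s, r * Real.sin s)) hf
      (.of_forall hcircle) hcircle'
  have hsplit : ∀ a b : ℝ, (a, b) = a • ((1, 0) : ℝ × ℝ) + b • (0, 1) := fun a b => by simp
  rw [polarLap, hr, hrr, hφφ, lap2_eq_fderiv hf, hsplit (Real.cos φ), hsplit (r * -Real.sin φ),
    hsplit (r * -Real.cos φ)]
  generalize fderiv ℝ (fderiv ℝ f) (r * Real.cos φ, r * Real.sin φ) = H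
  generalize fderiv ℝ f (r * Real.cos φ, r * Real.sin φ) = D
  simp only [map_add, map_smul, add_apply, smul_apply, smul_eq_mul, map_zero]
  field_simp
  linear_combination r * (H (1, 0) (1, 0) + H (0, 1) (0, 1)) * Real.cos_sq_add_sin_sq φ

theorem polarLap_congr {G H : ℝ × ℝ → ℝ} {p : ℝ × ℝ} (h : G =ᶠ[𝓝 p] H) :
    polarLap G p = polarLap H p := by
  have hx : (fun s => G (s, p.2)) =ᶠ[𝓝 p.1] fun s => H (s, p.2) :=
    (Continuous.prodMk_left p.2).continuousAt.eventually h
  have hy : (fun s => G (p.1, s)) =ᶠ[𝓝 p.2] fun s => H (p.1, s) :=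
    (Continuous.prodMk_right p.1).continuousAt.eventually h
  have hxx : pdx (pdx G) p = pdx (pdx H) p := hx.deriv.deriv_eq
  have hyy : pdy (pdy G) p = pdy (pdy H) p := hy.deriv.deriv_eq
  have hx₁ : pdx G p = pdx H p := hx.deriv_eq
  rw [polarLap, polarLap, hxx, hyy, hx₁]

theorem lap2_eq_polarLap {f G : ℝ × ℝ → ℝ} {p : ℝ × ℝ} (hp : p.1 ≠ 0)
    (hG : ContDiffAt ℝ 2 G p) (hfG : f ∘ polarCoord.symm =ᶠ[𝓝 p] G) :
    lap2 f (polarCoord.symm p) = polarLap G p := by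
  have hf : ContDiffAt ℝ 2 f (polarCoord.symm p) :=
    contDiffAt_of_comp_polarCoord_symm two_ne_zero hp (hG.congr_of_eventuallyEq hfG)
  rw [← polarLap_comp_polarCoord_symm hp hf, polarLap_congr hfG]

theorem polarLap_sum {ι : Type*} {u : Finset ι} {G : ι → ℝ × ℝ → ℝ} {p : ℝ × ℝ}
    (hG : ∀ i ∈ u, ContDiffAt ℝ 2 (G i) p) :
    polarLap (fun q => ∑ i ∈ u, G i q) p = ∑ i ∈ u, polarLap (G i) p := by
  have hx : ∀ i ∈ u, ContDiffAt ℝ 2 (fun s => G i (s, p.2)) p.1 := fun i hi =>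
    (hG i hi).comp (f := fun s => (s, p.2)) p.1 (by fun_prop)
  have hy : ∀ i ∈ u, ContDiffAt ℝ 2 (fun s => G i (p.1, s)) p.2 := fun i hi =>
    (hG i hi).comp (f := fun s => (p.1, s)) p.2 (by fun_prop)
  have hxx : pdx (pdx fun q => ∑ i ∈ u, G i q) p = ∑ i ∈ u, pdx (pdx (G i)) p := by
    simpa only [pdx, iteratedDeriv_succ, iteratedDeriv_zero] using iteratedDeriv_fun_sum (n := 2) hx
  have hyy : pdy (pdy fun q => ∑ i ∈ u, G i q) p = ∑ i ∈ u, pdy (pdy (G i)) p := by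
    simpa only [pdy, iteratedDeriv_succ, iteratedDeriv_zero] using iteratedDeriv_fun_sum (n := 2) hy
  have hx₁ : pdx (fun q => ∑ i ∈ u, G i q) p = ∑ i ∈ u, pdx (G i) p :=
    deriv_fun_sum fun i hi => (hx i hi).differentiableAt two_ne_zero
  simp only [polarLap, hxx, hyy, hx₁, Finset.sum_add_distrib, Finset.sum_div]

theorem deriv_deriv_mul {𝕜 : Type*} [NontriviallyNormedField 𝕜] {f g : 𝕜 → 𝕜} {t : 𝕜}
    (hf : ContDiffAt 𝕜 2 f t) (hg : ContDiffAt 𝕜 2 g t) :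
    deriv (deriv fun s => f s * g s) t =
      deriv (deriv f) t * g t + 2 * (deriv f t * deriv g t) + f t * deriv (deriv g) t := by
  have h := iteratedDeriv_mul hf hg
  simp only [Finset.sum_range_succ, Finset.sum_range_zero, iteratedDeriv_succ, iteratedDeriv_zero,
    Pi.mul_def, zero_add, Nat.choose_zero_right, Nat.choose_one_right, Nat.choose_self,
    Nat.cast_one, Nat.cast_ofNat, Nat.sub_zero, Nat.sub_self, Nat.add_one_sub_one] at h
  rw [h]
  ring

theorem polarLap_const_mul (c : ℝ) (G : ℝ × ℝ → ℝ) (p : ℝ × ℝ) :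
    polarLap (fun q => c * G q) p = c * polarLap G p := by
  have hx : pdx (fun q => c * G q) = fun q => c * pdx G q :=
    funext fun _ => deriv_const_mul_field c
  have hy : pdy (fun q => c * G q) = fun q => c * pdy G q :=
    funext fun _ => deriv_const_mul_field c
  have hxx : pdx (fun q => c * pdx G q) p = c * pdx (pdx G) p := deriv_const_mul_field c
  have hyy : pdy (fun q => c * pdy G q) p = c * pdy (pdy G) p := deriv_const_mul_field c
  rw [polarLap, polarLap, hx, hy, hxx, hyy]
  ring

theorem polarLap_mul {ψ : ℝ → ℝ} {F : ℝ × ℝ → ℝ} {p : ℝ × ℝ}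
    (hψ : ContDiffAt ℝ 2 ψ p.2) (hF : ContDiffAt ℝ 2 F p) :
    polarLap (fun q => ψ q.2 * F q) p = ψ p.2 * polarLap F p +
      (2 * deriv ψ p.2 * pdy F p + deriv (deriv ψ) p.2 * F p) / p.1 ^ 2 := by
  have hFy : ContDiffAt ℝ 2 (fun s => F (p.1, s)) p.2 :=
    hF.comp (f := fun s => (p.1, s)) p.2 (by fun_prop)
  have hx₁ (q : ℝ × ℝ) : pdx (fun q => ψ q.2 * F q) q = ψ q.2 * pdx F q :=
    deriv_const_mul_field (ψ q.2)
  have hxx : pdx (pdx fun q => ψ q.2 * F q) p = ψ p.2 * pdx (pdx F) p := by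
    rw [funext hx₁]
    exact deriv_const_mul_field (ψ p.2)
  have hyy : pdy (pdy fun q => ψ q.2 * F q) p = _ := deriv_deriv_mul hψ hFy
  rw [polarLap, polarLap, hx₁, hxx, hyy]
  simp only [pdy]
  ring

end Polar

section Wronskian

open scoped ContDiff

theorem hasDerivAt_det {n 𝕜 : Type*} [Fintype n] [DecidableEq n] [NontriviallyNormedField 𝕜]
    {A : 𝕜 → Matrix n n 𝕜} {A' : Matrix n n 𝕜} {t : 𝕜}
    (hA : ∀ i j, HasDerivAt (fun s => A s i j) (A' i j) t) :
    HasDerivAt (fun s => (A s).det) (∑ j, ((A t).updateCol j (A'.col j)).det) t := by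
  have hprod (σ : Equiv.Perm n) : HasDerivAt (fun s => ∏ i, A s (σ i) i)
      (∑ j, ∏ i, (A t).updateCol j (A'.col j) (σ i) i) t := by
    refine (HasDerivAt.fun_finsetProd fun i _ => hA (σ i) i).congr_deriv
      (Finset.sum_congr rfl fun j _ => ?_)
    rw [← Finset.mul_prod_erase _ _ (Finset.mem_univ j), mul_comm, Matrix.updateCol_self]
    congr 1
    exact Finset.prod_congr rfl fun i hi =>
      (Matrix.updateCol_ne (Finset.ne_of_mem_erase hi)).symm
  simp only [Matrix.det_apply']
  rw [Finset.sum_comm]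
  simp only [← Finset.mul_sum]
  exact HasDerivAt.fun_sum fun σ _ => (hprod σ).const_mul _

/-- The matrix whose determinant is the Wronskian `wronsk f t`. -/
noncomputable def wronskMatrix {n : ℕ} (f : Fin n → ℝ → ℝ) (t : ℝ) : Matrix (Fin n) (Fin n) ℝ :=
  Matrix.of fun i j : Fin n => iteratedDeriv (j : ℕ) (f i) t

/-- The functions `ψ_i = (-1)^(i+m) Wr[f_0, …, f_{i-1}, f_{i+1}, …, f_m] / Wr[f_0, …, f_m]`: up to
sign the quotients `Ψ_i` of Wronskians, with the signs chosen to make `(ψ_i)` the last row of the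
inverse of the Wronskian matrix. Where the Wronskian vanishes the value is `0`. -/
noncomputable def wronskDual {m : ℕ} (f : Fin (m + 1) → ℝ → ℝ) (i : Fin (m + 1)) (t : ℝ) : ℝ :=
  (-1) ^ ((i : ℕ) + m) * (wronsk (fun j => f (i.succAbove j)) t / wronsk f t)

theorem hasDerivAt_iteratedDeriv {𝕜 E : Type*} [NontriviallyNormedField 𝕜]
    [NormedAddCommGroup E] [NormedSpace 𝕜 E] {g : 𝕜 → E} (hg : ContDiff 𝕜 ∞ g) (j : ℕ) (t : 𝕜) :
    HasDerivAt (iteratedDeriv j g) (iteratedDeriv (j + 1) g t) t := by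
  rw [iteratedDeriv_succ]
  exact (hg.differentiable_iteratedDeriv j (mod_cast ENat.natCast_lt_top j) t).hasDerivAt

theorem contDiff_wronsk {n : ℕ} {f : Fin n → ℝ → ℝ} (hf : ∀ i, ContDiff ℝ ∞ (f i)) :
    ContDiff ℝ ∞ (wronsk f) := by
  have hentry (i : Fin n) (j : ℕ) : ContDiff ℝ ∞ (iteratedDeriv j (f i)) := by
    rw [iteratedDeriv_eq_iterate]
    exact (hf i).iterate_deriv j
  unfold wronsk
  simp only [Matrix.det_apply', Matrix.of_apply]
  exact ContDiff.sum fun σ _ => contDiff_const.mul (contDiff_prod fun j _ => hentry (σ j) j)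

variable {m : ℕ} {f : Fin (m + 1) → ℝ → ℝ} {t : ℝ}

theorem eventually_wronsk_ne_zero (hf : ∀ i, ContDiff ℝ ∞ (f i)) (ht : wronsk f t ≠ 0) :
    ∀ᶠ s in 𝓝 t, wronsk f s ≠ 0 :=
  (contDiff_wronsk hf).continuous.continuousAt.eventually_ne ht

theorem contDiffAt_wronskDual (hf : ∀ i, ContDiff ℝ ∞ (f i)) (ht : wronsk f t ≠ 0)
    (i : Fin (m + 1)) : ContDiffAt ℝ ∞ (wronskDual f i) t :=
  contDiffAt_const.mul ((contDiff_wronsk fun j => hf (i.succAbove j)).contDiffAt.div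
    (contDiff_wronsk hf).contDiffAt ht)

theorem adjugate_wronskMatrix_last (ht : wronsk f t ≠ 0) (i : Fin (m + 1)) :
    (wronskMatrix f t).adjugate (Fin.last m) i = wronsk f t * wronskDual f i t := by
  have hminor : ((wronskMatrix f t).submatrix i.succAbove (Fin.last m).succAbove).det =
      wronsk (fun j => f (i.succAbove j)) t := by
    rw [Fin.succAbove_last]
    rfl
  rw [Matrix.adjugate_fin_succ_eq_det_submatrix, hminor, wronskDual, Fin.val_last]
  field_simp

theorem sum_wronskDual_mul_iteratedDeriv (ht : wronsk f t ≠ 0) {j : ℕ} (hj : j ≤ m) :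
    ∑ i, wronskDual f i t * iteratedDeriv j (f i) t = if j = m then 1 else 0 := by
  have hadj := congrFun₂ (Matrix.adjugate_mul (wronskMatrix f t)) (Fin.last m)
    ⟨j, Nat.lt_succ_of_le hj⟩
  simp only [Matrix.mul_apply, adjugate_wronskMatrix_last ht, mul_assoc, ← Finset.mul_sum,
    Matrix.smul_apply, smul_eq_mul, Matrix.one_apply, Fin.ext_iff, Fin.val_last,
    eq_comm (a := m)] at hadj
  exact mul_left_cancel₀ ht hadj

theorem hasDerivAt_wronsk (hf : ∀ i, ContDiff ℝ ∞ (f i)) (ht : wronsk f t ≠ 0) :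
    HasDerivAt (wronsk f)
      (wronsk f t * ∑ i, wronskDual f i t * iteratedDeriv (m + 1) (f i) t) t := by
  have hdet := hasDerivAt_det (A := wronskMatrix f)
    (A' := Matrix.of fun i j => iteratedDeriv (j + 1) (f i) t) fun i j =>
      hasDerivAt_iteratedDeriv (hf i) j t
  -- Differentiating any column but the last one reproduces the next column.
  have hzero (j : Fin m) : ((wronskMatrix f t).updateCol j.castSucc
      ((Matrix.of fun i j : Fin (m + 1) => iteratedDeriv (j + 1) (f i) t).col j.castSucc)).det =
        0 := by
    refine Matrix.det_zero_of_column_eq (Fin.castSucc_lt_succ (i := j)).ne fun i => ?_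
    rw [Matrix.updateCol_self, Matrix.updateCol_ne (Fin.castSucc_lt_succ (i := j)).ne']
    rfl
  refine hdet.congr_deriv ?_
  rw [Fin.sum_univ_castSucc, Finset.sum_eq_zero fun j _ => hzero j, zero_add,
    ← Matrix.cramer_apply, Matrix.cramer_eq_adjugate_mulVec]
  simp only [Matrix.mulVec, dotProduct, adjugate_wronskMatrix_last ht, Finset.mul_sum, mul_assoc,
    Matrix.col_apply, Matrix.of_apply, Fin.val_last]

theorem sum_wronskDual_mul_iteratedDeriv_succ (hf : ∀ i, ContDiff ℝ ∞ (f i))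
    (ht : wronsk f t ≠ 0) :
    ∑ i, wronskDual f i t * iteratedDeriv (m + 1) (f i) t =
      deriv (fun s => Real.log (wronsk f s)) t := by
  rw [((hasDerivAt_wronsk hf ht).log ht).deriv, mul_div_cancel_left₀ _ ht]

theorem eq_of_sum_mul_iteratedDeriv_eq (ht : wronsk f t ≠ 0) {v w : Fin (m + 1) → ℝ}
    (h : ∀ j ≤ m, ∑ i, v i * iteratedDeriv j (f i) t = ∑ i, w i * iteratedDeriv j (f i) t) :
    v = w := by
  rw [← sub_eq_zero]
  refine Matrix.eq_zero_of_vecMul_eq_zero (M := wronskMatrix f t) ht (funext fun j => ?_)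
  simp only [Matrix.vecMul, dotProduct, Pi.sub_apply, sub_mul, Finset.sum_sub_distrib,
    Pi.zero_apply, sub_eq_zero]
  exact h j (Nat.le_of_lt_succ j.2)

theorem hasDerivAt_sum_mul_iteratedDeriv {v : Fin (m + 1) → ℝ → ℝ} {v' : Fin (m + 1) → ℝ}
    (hf : ∀ i, ContDiff ℝ ∞ (f i)) (hv : ∀ i, HasDerivAt (v i) (v' i) t) (j : ℕ) :
    HasDerivAt (fun s => ∑ i, v i s * iteratedDeriv j (f i) s)
      (∑ i, v' i * iteratedDeriv j (f i) t + ∑ i, v i t * iteratedDeriv (j + 1) (f i) t) t := by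
  rw [← Finset.sum_add_distrib]
  exact HasDerivAt.fun_sum fun i _ => (hv i).mul (hasDerivAt_iteratedDeriv (hf i) j t)

theorem hasDerivAt_wronskDual (hf : ∀ i, ContDiff ℝ ∞ (f i)) (ht : wronsk f t ≠ 0)
    (i : Fin (m + 1)) : HasDerivAt (wronskDual f i) (deriv (wronskDual f i) t) t :=
  ((contDiffAt_wronskDual hf ht i).differentiableAt (by simp)).hasDerivAt

theorem hasDerivAt_deriv_wronskDual (hf : ∀ i, ContDiff ℝ ∞ (f i)) (ht : wronsk f t ≠ 0)
    (i : Fin (m + 1)) :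
    HasDerivAt (deriv (wronskDual f i)) (deriv (deriv (wronskDual f i)) t) t :=
  (((contDiffAt_wronskDual hf ht i).derivWithin (m := ∞) le_rfl).differentiableAt
    (by simp)).hasDerivAt

theorem sum_deriv_wronskDual_mul_iteratedDeriv (hf : ∀ i, ContDiff ℝ ∞ (f i))
    (ht : wronsk f t ≠ 0) {j : ℕ} (hj : j ≤ m) :
    ∑ i, deriv (wronskDual f i) t * iteratedDeriv j (f i) t =
      -∑ i, wronskDual f i t * iteratedDeriv (j + 1) (f i) t := by
  have hconst : (fun s => ∑ i, wronskDual f i s * iteratedDeriv j (f i) s) =ᶠ[𝓝 t]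
      fun _ => if j = m then 1 else 0 :=
    (eventually_wronsk_ne_zero hf ht).mono fun s hs => sum_wronskDual_mul_iteratedDeriv hs hj
  have hderiv := hasDerivAt_sum_mul_iteratedDeriv hf (hasDerivAt_wronskDual hf ht) j
  exact eq_neg_of_add_eq_zero_left
    (hderiv.unique ((hasDerivAt_const t _).congr_of_eventuallyEq hconst))

theorem deriv_sum_wronskDual_mul_iteratedDeriv_succ (hf : ∀ i, ContDiff ℝ ∞ (f i))
    (ht : wronsk f t ≠ 0) {j : ℕ} (hj : j ≤ m) :
    deriv (fun s => ∑ i, wronskDual f i s * iteratedDeriv (j + 1) (f i) s) t =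
      deriv (deriv fun s => Real.log (wronsk f s)) t * if j = m then 1 else 0 := by
  have hne := eventually_wronsk_ne_zero hf ht
  split_ifs with hjm
  · subst hjm
    rw [mul_one]
    exact EventuallyEq.deriv_eq (hne.mono fun s hs => sum_wronskDual_mul_iteratedDeriv_succ hf hs)
  · have hlt : j + 1 ≤ m := by omega
    rw [mul_zero]
    refine (EventuallyEq.deriv_eq (hne.mono fun s hs =>
      sum_wronskDual_mul_iteratedDeriv hs hlt)).trans (deriv_const _ _)

theorem iteratedDeriv_add_two_of_deriv_deriv {𝕜 : Type*} [NontriviallyNormedField 𝕜] {g : 𝕜 → 𝕜}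
    {c : 𝕜} (hg : ∀ s, deriv (deriv g) s = c * g s) (j : ℕ) (s : 𝕜) :
    iteratedDeriv (j + 2) g s = c * iteratedDeriv j g s := by
  rw [iteratedDeriv_succ', iteratedDeriv_succ', funext hg, iteratedDeriv_const_mul_field]

-- Crum's theorem: pair both sides with the derivatives `f_i^{(j)}`, `j ≤ m`.
theorem deriv_deriv_wronskDual {c : Fin (m + 1) → ℝ} (hf : ∀ i, ContDiff ℝ ∞ (f i))
    (hc : ∀ i s, deriv (deriv (f i)) s = c i * f i s) (ht : wronsk f t ≠ 0) (i : Fin (m + 1)) :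
    deriv (deriv (wronskDual f i)) t =
      (c i - 2 * deriv (deriv fun s => Real.log (wronsk f s)) t) * wronskDual f i t := by
  refine congrFun (eq_of_sum_mul_iteratedDeriv_eq ht
    (v := fun i => deriv (deriv (wronskDual f i)) t)
    (w := fun i => (c i - 2 * deriv (deriv fun s => Real.log (wronsk f s)) t) * wronskDual f i t)
    fun j hj => ?_) i
  have hfirst := hasDerivAt_sum_mul_iteratedDeriv hf (hasDerivAt_wronskDual hf ht) (j + 1)
  have hsecond := hasDerivAt_sum_mul_iteratedDeriv hf (hasDerivAt_deriv_wronskDual hf ht) j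
  have hneg : (fun s => ∑ i, deriv (wronskDual f i) s * iteratedDeriv j (f i) s) =ᶠ[𝓝 t]
      fun s => -∑ i, wronskDual f i s * iteratedDeriv (j + 1) (f i) s :=
    (eventually_wronsk_ne_zero hf ht).mono fun s hs =>
      sum_deriv_wronskDual_mul_iteratedDeriv hf hs hj
  have hcancel := hsecond.unique (hfirst.neg.congr_of_eventuallyEq hneg)
  have hlog := deriv_sum_wronskDual_mul_iteratedDeriv_succ hf ht hj
  rw [hfirst.deriv, ← sum_wronskDual_mul_iteratedDeriv ht hj] at hlog
  simp only [iteratedDeriv_add_two_of_deriv_deriv (hc _)] at hcancel hlog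
  have hsplit : ∑ i, (c i - 2 * deriv (deriv fun s => Real.log (wronsk f s)) t) *
      wronskDual f i t * iteratedDeriv j (f i) t =
      ∑ i, wronskDual f i t * (c i * iteratedDeriv j (f i) t) -
        2 * (deriv (deriv fun s => Real.log (wronsk f s)) t *
          ∑ i, wronskDual f i t * iteratedDeriv j (f i) t) := by
    simp only [Finset.mul_sum, ← Finset.sum_sub_distrib]
    exact Finset.sum_congr rfl fun i _ => by ring
  rw [hsplit]
  linarith

end Wronskian

theorem prod_univ_erase_zero {M : Type*} [CommMonoid M] {m : ℕ} (f : Fin (m + 1) → M) :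
    ∏ j ∈ Finset.univ.erase 0, f j = ∏ j : Fin m, f j.succ := by
  simp [← Finset.filter_ne', Finset.prod_filter, Fin.prod_univ_succ]

theorem prod_univ_erase_succ {M : Type*} [CommMonoid M] {m : ℕ} (f : Fin (m + 1) → M) (i : Fin m) :
    ∏ j ∈ Finset.univ.erase i.succ, f j = f 0 * ∏ j ∈ Finset.univ.erase i, f j.succ := by
  simp [← Finset.filter_ne', Finset.prod_filter, Fin.prod_univ_succ, (Fin.succ_ne_zero i).symm]

section Interpolation

open Polynomial Lagrange

variable {F ι : Type*} [Field F]

/-- The interpolation nodes `0` (at `none`) and `±κ i` (at `inl i` and `inr i`). -/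
def symmetricNodes (κ : ι → F) : Option (ι ⊕ ι) → F :=
  fun o => o.elim 0 (Sum.elim κ fun i => -κ i)

theorem symmetricNodes_injective [NeZero (2 : F)] {κ : ι → F} (hκ0 : ∀ i, κ i ≠ 0)
    (hκ : Function.Injective fun i => κ i ^ 2) : Function.Injective (symmetricNodes κ) := by
  have hneg (i j : ι) : κ i ≠ -κ j := fun h => by
    obtain rfl : i = j := hκ (by simp only [h, neg_sq])
    exact mul_ne_zero two_ne_zero (hκ0 i) (by linear_combination h)
  have hinj : Function.Injective κ := fun i j h => hκ (congrArg (· ^ 2) h)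
  rintro (_ | i | i) (_ | j | j) h <;>
    simp only [symmetricNodes, Option.elim, Sum.elim_inl, Sum.elim_inr] at h
  · rfl
  · exact absurd h.symm (hκ0 j)
  · exact absurd h.symm (neg_ne_zero.2 (hκ0 j))
  · exact absurd h (hκ0 i)
  · rw [hinj h]
  · exact absurd h (hneg i j)
  · exact absurd h (neg_ne_zero.2 (hκ0 i))
  · exact absurd h.symm (hneg j i)
  · rw [hinj (neg_injective h)]

theorem nodal_symmetricNodes [Fintype ι] (κ : ι → F) :
    nodal Finset.univ (symmetricNodes κ) =
      X * (nodal Finset.univ fun i => κ i ^ 2).comp (X ^ 2) := by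
  simp only [nodal, Fintype.prod_option, Fintype.prod_sum_type, symmetricNodes, Option.elim,
    Sum.elim_inl, Sum.elim_inr, ← Finset.prod_mul_distrib, prod_comp, sub_comp, X_comp, C_comp,
    C_0, C_neg, sub_zero]
  exact congrArg _ (Finset.prod_congr rfl fun i _ => by rw [C_pow]; ring)

theorem eval_zero_derivative_nodal_symmetricNodes [Fintype ι] (κ : ι → F) :
    (nodal Finset.univ (symmetricNodes κ)).derivative.eval 0 = ∏ i, -κ i ^ 2 := by
  rw [nodal_symmetricNodes]
  simp [eval_nodal]

variable {s : Finset ι} {v : ι → F}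

theorem coeff_eq_sum_eval_mul_pow_mul_nodalWeight [DecidableEq ι] (hv : Set.InjOn v s)
    {P : F[X]} {d l : ℕ} (hs : s.card = d + l + 1) (hP : P.natDegree ≤ d) :
    P.coeff d = ∑ i ∈ s, P.eval (v i) * v i ^ l * nodalWeight s v i := by
  have hdeg : (P * X ^ l).degree < (s.card : WithBot ℕ) := by
    rw [hs]
    refine (degree_le_of_natDegree_le
      (natDegree_mul_le_of_le hP (natDegree_X_pow_le l))).trans_lt ?_
    exact_mod_cast Nat.lt_succ_self _
  rw [← coeff_mul_X_pow P l d, ← Nat.add_sub_cancel (d + l) 1, ← hs, coeff_eq_sum hv hdeg]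
  simp only [eval_mul, eval_pow, eval_X, div_eq_mul_inv, nodalWeight, Finset.prod_inv_distrib]

theorem natDegree_interpolate_le_of_moments_eq_zero [DecidableEq ι] (hv : Set.InjOn v s)
    {r : ι → F} {d e : ℕ} (hs : s.card = d + e + 1)
    (hr : ∀ l < e, ∑ i ∈ s, r i * v i ^ l * nodalWeight s v i = 0) :
    (interpolate s v r).natDegree ≤ d := by
  induction e generalizing d with
  | zero =>
    refine natDegree_le_of_degree_le (Order.le_of_lt_succ ?_)
    have hlt := degree_interpolate_lt r hv
    rw [hs] at hlt
    exact_mod_cast hlt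
  | succ e ih =>
    have hs' : s.card = d + 1 + e + 1 := by omega
    have hle : (interpolate s v r).natDegree ≤ d + 1 := ih hs' fun l hl => hr l (by omega)
    have hcoeff := coeff_eq_sum_eval_mul_pow_mul_nodalWeight hv hs' hle
    rw [Finset.sum_congr rfl fun i hi => by rw [eval_interpolate_at_node r hv hi],
      hr e (Nat.lt_succ_self e)] at hcoeff
    exact natDegree_le_pred hle hcoeff

theorem eval_derivative_nodal_mul_nodalWeight [DecidableEq ι] (hv : Set.InjOn v s) {i : ι}
    (hi : i ∈ s) :
    (nodal s v).derivative.eval (v i) * nodalWeight s v i = 1 := by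
  have hne := nodalWeight_ne_zero hv hi
  rw [nodalWeight_eq_eval_derivative_nodal hi] at hne ⊢
  exact mul_inv_cancel₀ fun h => hne (by rw [h, inv_zero])

theorem exists_eval_eq_eval_derivative_nodal_mul {d e : ℕ} (hv : Set.InjOn v s)
    (hs : s.card = d + e + 1) {a : ι → F} {α : F}
    (ha : ∀ l ≤ e, ∑ i ∈ s, a i * v i ^ l = if l = e then α else 0) :
    ∃ P : F[X], P.natDegree ≤ d ∧ P.coeff d = α ∧
      ∀ i ∈ s, P.eval (v i) = (nodal s v).derivative.eval (v i) * a i := by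
  classical
  have heval {i : ι} (hi : i ∈ s) := eval_interpolate_at_node
    (fun i => (nodal s v).derivative.eval (v i) * a i) hv hi
  have hmoment (l : ℕ) : ∑ i ∈ s, (nodal s v).derivative.eval (v i) * a i * v i ^ l *
      nodalWeight s v i = ∑ i ∈ s, a i * v i ^ l :=
    Finset.sum_congr rfl fun i hi => by
      linear_combination a i * v i ^ l * eval_derivative_nodal_mul_nodalWeight hv hi
  have hdeg := natDegree_interpolate_le_of_moments_eq_zero hv hs
    fun l hl => by rw [hmoment, ha l hl.le, if_neg hl.ne]
  refine ⟨_, hdeg, ?_, fun i hi => heval hi⟩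
  rw [coeff_eq_sum_eval_mul_pow_mul_nodalWeight hv hs hdeg,
    Finset.sum_congr rfl fun i hi => by rw [heval hi], hmoment, ha e le_rfl, if_pos rfl]

-- Both sides are the coefficient of degree `d + e` in the product of the two interpolants.
theorem sum_eval_derivative_nodal_mul_mul {d e : ℕ} (hv : Set.InjOn v s)
    (hs : s.card = d + e + 1) {a b : ι → F} {α β : F}
    (ha : ∀ l ≤ d, ∑ i ∈ s, a i * v i ^ l = if l = d then α else 0)
    (hb : ∀ l ≤ e, ∑ i ∈ s, b i * v i ^ l = if l = e then β else 0) :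
    ∑ i ∈ s, (nodal s v).derivative.eval (v i) * a i * b i = α * β := by
  classical
  obtain ⟨P, hPdeg, hPcoeff, hP⟩ :=
    exists_eval_eq_eval_derivative_nodal_mul hv (by omega : s.card = e + d + 1) ha
  obtain ⟨Q, hQdeg, hQcoeff, hQ⟩ := exists_eval_eq_eval_derivative_nodal_mul hv hs hb
  have hs' : s.card = e + d + 0 + 1 := by omega
  have hcoeff := coeff_eq_sum_eval_mul_pow_mul_nodalWeight (d := e + d) (l := 0) hv hs'
    (natDegree_mul_le_of_le hPdeg hQdeg)
  rw [coeff_mul_add_eq_of_natDegree_le hPdeg hQdeg, hPcoeff, hQcoeff] at hcoeff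
  rw [hcoeff]
  refine Finset.sum_congr rfl fun i hi => ?_
  rw [eval_mul, hP i hi, hQ i hi]
  linear_combination -(nodal s v).derivative.eval (v i) * a i * b i *
    eval_derivative_nodal_mul_nodalWeight hv hi

theorem eval_derivative_nodal_symmetricNodes [Fintype ι] [DecidableEq ι] {κ : ι → F} {x : F} {i : ι}
    (hx : x ^ 2 = κ i ^ 2) :
    (nodal Finset.univ (symmetricNodes κ)).derivative.eval x =
      2 * (κ i ^ 2 * ∏ j ∈ Finset.univ.erase i, (κ i ^ 2 - κ j ^ 2)) := by
  have hderiv := eval_nodal_derivative_eval_node_eq (v := fun i => κ i ^ 2) (Finset.mem_univ i)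
  have hroot := eval_nodal_at_node (v := fun i => κ i ^ 2) (Finset.mem_univ i)
  rw [eval_nodal] at hderiv
  rw [nodal_symmetricNodes]
  simp only [derivative_mul, derivative_X, derivative_comp, derivative_X_pow, eval_add, eval_mul,
    eval_comp, eval_pow, eval_X, eval_C, eval_one, hx, hroot, hderiv]
  rw [Nat.cast_ofNat, Nat.add_one_sub_one, pow_one, mul_zero, zero_add, ← hx]
  ring

/-- Coefficients at the nodes `0` and `±κ_i` whose moments are those of the coefficients `c_i` at
`κ_i` and `c'_i` at `-κ_i`, for `κ_0 = 0` and `c_0 = c'_0`: the index `0`, which carries the node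
`0` twice, is traded for the index `none`. -/
def symmetricCoeffs {m : ℕ} (c c' : Fin (m + 1) → F) : Option (Fin m ⊕ Fin m) → F :=
  fun o => o.elim (2 * c 0) (Sum.elim (fun i => c i.succ) fun i => c' i.succ)

theorem sum_symmetricCoeffs_mul_symmetricNodes_pow {m : ℕ} {κ c c' : Fin (m + 1) → F}
    (hκ0 : κ 0 = 0) (hc0 : c 0 = c' 0) (l : ℕ) :
    ∑ o, symmetricCoeffs c c' o * symmetricNodes (fun i : Fin m => κ i.succ) o ^ l =
      ∑ i, (c i * κ i ^ l + c' i * (-κ i) ^ l) := by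
  rw [Fin.sum_univ_succ, Finset.sum_add_distrib, ← hc0, hκ0, neg_zero, ← two_mul, ← mul_assoc]
  simp [symmetricNodes, symmetricCoeffs]

theorem two_mul_sum_prod_sq_sub_sq_mul [NeZero (2 : F)] {m : ℕ} {κ : Fin (m + 1) → F}
    (hκ0 : κ 0 = 0) (hκ : Function.Injective fun i => κ i ^ 2) {a a' b b' : Fin (m + 1) → F}
    (ha0 : a 0 = a' 0) (hb0 : b 0 = b' 0) {α β : F}
    (ha : ∀ l ≤ m, ∑ i, (a i * κ i ^ l + a' i * (-κ i) ^ l) = if l = m then α else 0)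
    (hb : ∀ l ≤ m, ∑ i, (b i * κ i ^ l + b' i * (-κ i) ^ l) = if l = m then β else 0) :
    2 * ∑ i, (∏ j ∈ Finset.univ.erase i, (κ i ^ 2 - κ j ^ 2)) * (a i * b i + a' i * b' i) =
      α * β := by
  have hκsucc (i : Fin m) : κ i.succ ≠ 0 := fun h =>
    Fin.succ_ne_zero i (hκ (by simp only [h, hκ0]))
  have hinj := symmetricNodes_injective hκsucc fun i j h => Fin.succ_injective m (hκ h)
  have hpair := sum_eval_derivative_nodal_mul_mul (d := m) (e := m) hinj.injOn
    (by simp [Finset.card_univ])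
    (fun l hl => (sum_symmetricCoeffs_mul_symmetricNodes_pow hκ0 ha0 l).trans (ha l hl))
    (fun l hl => (sum_symmetricCoeffs_mul_symmetricNodes_pow hκ0 hb0 l).trans (hb l hl))
  have hplus (i : Fin m) := eval_derivative_nodal_symmetricNodes (κ := fun i : Fin m => κ i.succ)
    (x := κ i.succ) (i := i) rfl
  have hminus (i : Fin m) := eval_derivative_nodal_symmetricNodes (κ := fun i : Fin m => κ i.succ)
    (x := -κ i.succ) (i := i) (neg_sq _)
  rw [← hpair, Fin.sum_univ_succ, prod_univ_erase_zero, mul_add]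
  simp only [prod_univ_erase_succ, hκ0, Fintype.sum_option, Fintype.sum_sum_type, symmetricNodes,
    symmetricCoeffs, Option.elim, Sum.elim_inl, Sum.elim_inr] at hplus hminus ⊢
  simp only [eval_zero_derivative_nodal_symmetricNodes, hplus, hminus, ← ha0, ← hb0,
    Finset.mul_sum, ← Finset.sum_add_distrib]
  refine congrArg₂ _ ?_ (Finset.sum_congr rfl fun i _ => by ring)
  simp only [zero_pow two_ne_zero, zero_sub]
  ring

end Interpolation

section Kernel

theorem iteratedDeriv_cos_mul_add (κ θ : ℝ) (j : ℕ) (t : ℝ) :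
    iteratedDeriv j (fun s => Real.cos (κ * s + θ)) t =
      κ ^ j * Real.cos (κ * t + θ + j * (Real.pi / 2)) := by
  induction j generalizing θ with
  | zero => simp
  | succ j ih =>
    have hderiv : deriv (fun s => Real.cos (κ * s + θ)) =
        fun s => κ * Real.cos (κ * s + (θ + Real.pi / 2)) := funext fun s => by
      have hlin : HasDerivAt (fun s => κ * s + θ) κ s := by
        simpa using ((hasDerivAt_id s).const_mul κ).add_const θ
      rw [hlin.cos.deriv, ← add_assoc, Real.cos_add_pi_div_two, mul_comm]
    rw [iteratedDeriv_succ', hderiv, iteratedDeriv_const_mul_field, ih]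
    push_cast
    ring_nf

theorem ofReal_iteratedDeriv_cos_mul_add (κ θ : ℝ) (j : ℕ) (t : ℝ) :
    ((iteratedDeriv j (fun s => Real.cos (κ * s + θ)) t : ℝ) : ℂ) =
      (Complex.exp ((κ * t + θ) * Complex.I) * (Complex.I * κ) ^ j +
        Complex.exp (-(κ * t + θ) * Complex.I) * (-(Complex.I * κ)) ^ j) / 2 := by
  have hquarter (ε : ℂ) : Complex.exp (ε * (j * (Real.pi / 2)) * Complex.I) =
      Complex.exp (ε * (Real.pi / 2 * Complex.I)) ^ j := by
    rw [← Complex.exp_nat_mul]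
    ring_nf
  have hplus := hquarter 1
  have hminus := hquarter (-1)
  rw [one_mul, one_mul, Complex.exp_pi_div_two_mul_I] at hplus
  rw [neg_one_mul, neg_one_mul, Complex.exp_neg, Complex.exp_pi_div_two_mul_I,
    Complex.inv_I] at hminus
  rw [iteratedDeriv_cos_mul_add]
  push_cast
  generalize (κ * t + θ : ℂ) = w
  rw [Complex.cos, neg_add, add_mul, add_mul, Complex.exp_add, Complex.exp_add,
    hplus, hminus, neg_mul_eq_neg_mul, mul_pow, mul_pow]
  ring

variable {m : ℕ} {k : Fin (m + 1) → ℤ} {θ : Fin (m + 1) → ℝ} {t s : ℝ}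

/-- Half of `ψ_i(t) e^{±i(k_i t + θ_i)}`, the sign being that of `ε = ±1`: the amplitudes of the two
exponentials that make up `ψ_i χ_i`, with `ψ_i` the dual Wronskian quotients. -/
noncomputable def dualAmplitude (m : ℕ) (k : Fin (m + 1) → ℤ) (θ : Fin (m + 1) → ℝ) (ε : ℂ)
    (t : ℝ) (i : Fin (m + 1)) : ℂ :=
  wronskDual (chiF m k θ) i t / 2 * Complex.exp (ε * (k i * t + θ i) * Complex.I)

theorem sum_dualAmplitude_mul_pow (ht : Wfn m k θ t ≠ 0) {l : ℕ} (hl : l ≤ m) :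
    ∑ i, (dualAmplitude m k θ 1 t i * (Complex.I * k i) ^ l +
      dualAmplitude m k θ (-1) t i * (-(Complex.I * k i)) ^ l) = if l = m then 1 else 0 := by
  have hdual : ∑ i, (wronskDual (chiF m k θ) i t : ℂ) *
      ((iteratedDeriv l (chiF m k θ i) t : ℝ) : ℂ) = if l = m then 1 else 0 := by
    simpa only [Complex.ofReal_sum, Complex.ofReal_mul, apply_ite ((↑) : ℝ → ℂ),
      Complex.ofReal_one, Complex.ofReal_zero]
      using congrArg ((↑) : ℝ → ℂ) (sum_wronskDual_mul_iteratedDeriv ht hl)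
  rw [← hdual]
  refine Finset.sum_congr rfl fun i _ => ?_
  unfold chiF dualAmplitude
  rw [ofReal_iteratedDeriv_cos_mul_add, one_mul, neg_one_mul, Complex.ofReal_intCast]
  unfold chiF
  ring

theorem sum_dualAmplitude_neg_mul_pow (ht : Wfn m k θ t ≠ 0) {l : ℕ} (hl : l ≤ m) :
    ∑ i, (dualAmplitude m k θ (-1) t i * (Complex.I * k i) ^ l +
      dualAmplitude m k θ 1 t i * (-(Complex.I * k i)) ^ l) = if l = m then (-1) ^ m else 0 := by
  have hflip : (-1) ^ l * (if l = m then 1 else 0 : ℂ) = if l = m then (-1) ^ m else 0 := by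
    split_ifs with h <;> simp [h]
  rw [← hflip, ← sum_dualAmplitude_mul_pow ht hl, Finset.mul_sum]
  refine Finset.sum_congr rfl fun i _ => ?_
  rw [mul_add, mul_left_comm, mul_left_comm ((-1) ^ l), ← mul_pow, ← mul_pow, neg_one_mul,
    neg_one_mul, neg_neg, add_comm]

theorem dualAmplitude_mul_add_dualAmplitude_mul (i : Fin (m + 1)) :
    dualAmplitude m k θ 1 t i * dualAmplitude m k θ (-1) s i +
      dualAmplitude m k θ (-1) t i * dualAmplitude m k θ 1 s i =
    wronskDual (chiF m k θ) i t * wronskDual (chiF m k θ) i s * Real.cos (k i * (t - s)) / 2 := by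
  have hplus : Complex.exp (k i * (t - s) * Complex.I) =
      Complex.exp (1 * (k i * t + θ i) * Complex.I) *
        Complex.exp (-1 * (k i * s + θ i) * Complex.I) := by
    rw [← Complex.exp_add]
    ring_nf
  have hminus : Complex.exp (-(k i * (t - s)) * Complex.I) =
      Complex.exp (-1 * (k i * t + θ i) * Complex.I) *
        Complex.exp (1 * (k i * s + θ i) * Complex.I) := by
    rw [← Complex.exp_add]
    ring_nf
  push_cast
  rw [Complex.cos, hplus, hminus]
  unfold dualAmplitude
  ring

theorem prod_erase_sq_sub_sq_eq_cF (i : Fin (m + 1)) :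
    ∏ j ∈ Finset.univ.erase i, ((Complex.I * k i) ^ 2 - (Complex.I * k j) ^ 2) =
      (-1) ^ m * cF m k i := by
  have hcard : (Finset.univ.erase i).card = m := by simp
  have hfactor (j : Fin (m + 1)) : (Complex.I * k i) ^ 2 - (Complex.I * k j) ^ 2 =
      -1 * ((k i : ℂ) ^ 2 - (k j : ℂ) ^ 2) := by
    rw [mul_pow, mul_pow, Complex.I_sq]
    ring
  simp only [hfactor, Finset.prod_mul_distrib, Finset.prod_const, hcard, cF]
  push_cast
  rfl

theorem injective_sq_I_mul (hk0 : k 0 = 0) (hk : StrictMono k) :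
    Function.Injective fun i => (Complex.I * k i) ^ 2 := fun i j h => by
  have hnonneg (i : Fin (m + 1)) : 0 ≤ k i := hk0 ▸ hk.monotone (Fin.zero_le i)
  have hsq : k i ^ 2 = k j ^ 2 := by
    simp only [mul_pow, Complex.I_sq, neg_one_mul, neg_inj] at h
    exact_mod_cast h
  exact hk.injective ((sq_eq_sq₀ (hnonneg i) (hnonneg j)).1 hsq)

theorem sum_cF_mul_wronskDual_mul_cos (hk0 : k 0 = 0) (hk : StrictMono k) (hθ0 : θ 0 = 0)
    (ht : Wfn m k θ t ≠ 0) (hs : Wfn m k θ s ≠ 0) :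
    ∑ i, cF m k i * wronskDual (chiF m k θ) i s * wronskDual (chiF m k θ) i t *
      Real.cos (k i * (t - s)) = 1 := by
  have hzero (t : ℝ) : dualAmplitude m k θ 1 t 0 = dualAmplitude m k θ (-1) t 0 := by
    simp [dualAmplitude, hk0, hθ0]
  have hsum := two_mul_sum_prod_sq_sub_sq_mul (κ := fun i => Complex.I * k i) (by simp [hk0])
    (injective_sq_I_mul hk0 hk) (hzero t) (hzero s).symm
    (fun _ => sum_dualAmplitude_mul_pow ht) fun _ => sum_dualAmplitude_neg_mul_pow hs
  simp only [prod_erase_sq_sub_sq_eq_cF, dualAmplitude_mul_add_dualAmplitude_mul] at hsum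
  rw [one_mul, Finset.mul_sum] at hsum
  rw [← Complex.ofReal_inj]
  refine mul_left_cancel₀ (pow_ne_zero m (neg_ne_zero.2 one_ne_zero)) (Eq.trans ?_ (hsum.trans
    (by rw [Complex.ofReal_one, mul_one])))
  rw [Complex.ofReal_sum, Finset.mul_sum]
  refine Finset.sum_congr rfl fun i _ => ?_
  push_cast
  ring

theorem contDiff_chiF (m : ℕ) (k : Fin (m + 1) → ℤ) (θ : Fin (m + 1) → ℝ) (i : Fin (m + 1)) :
    ContDiff ℝ ((⊤ : ℕ∞) : WithTop ℕ∞) (chiF m k θ i) := by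
  unfold chiF
  fun_prop

theorem deriv_deriv_chiF (m : ℕ) (k : Fin (m + 1) → ℤ) (θ : Fin (m + 1) → ℝ) (i : Fin (m + 1))
    (t : ℝ) : deriv (deriv (chiF m k θ i)) t = -(k i : ℝ) ^ 2 * chiF m k θ i t := by
  have h := iteratedDeriv_cos_mul_add (k i) (θ i) 2 t
  rw [iteratedDeriv_succ, iteratedDeriv_one, Nat.cast_ofNat, mul_div_cancel₀ _ two_ne_zero,
    Real.cos_add_pi, mul_neg, ← neg_mul] at h
  exact h

theorem hasDerivAt_cos_sub_const (ϕ t : ℝ) :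
    HasDerivAt (fun t => Real.cos (t - ϕ)) (-Real.sin (t - ϕ)) t := by
  simpa using ((hasDerivAt_id t).sub_const ϕ).cos

theorem sum_cF_mul_deriv_wronskDual (hk0 : k 0 = 0) (hk : StrictMono k) (hθ0 : θ 0 = 0)
    (ht : Wfn m k θ t ≠ 0) (hs : Wfn m k θ s ≠ 0) :
    ∑ i, cF m k i * wronskDual (chiF m k θ) i s *
      (deriv (wronskDual (chiF m k θ) i) t *
          (Polynomial.Chebyshev.T ℝ (k i)).eval (Real.cos (t - s)) -
        Real.sin (t - s) * wronskDual (chiF m k θ) i t *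
          (Polynomial.Chebyshev.T ℝ (k i)).derivative.eval (Real.cos (t - s))) = 0 := by
  have hcheb (i : Fin (m + 1)) :=
    ((Polynomial.Chebyshev.T ℝ (k i)).hasDerivAt _).comp t (hasDerivAt_cos_sub_const s t)
  have hsum := HasDerivAt.fun_sum (u := Finset.univ) fun i _ =>
    ((hasDerivAt_wronskDual (contDiff_chiF m k θ) ht i).fun_mul (hcheb i)).const_mul
      (cF m k i * wronskDual (chiF m k θ) i s)
  have hconst := (hasDerivAt_const t (1 : ℝ)).congr_of_eventuallyEq
    ((eventually_wronsk_ne_zero (contDiff_chiF m k θ) ht).mono fun t' ht' =>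
      sum_cF_mul_wronskDual_mul_cos hk0 hk hθ0 ht' hs)
  simp only [← Polynomial.Chebyshev.T_real_cos, mul_assoc] at hconst
  simp only [Function.comp_apply, mul_assoc] at hsum
  rw [← hsum.unique hconst]
  exact Finset.sum_congr rfl fun i _ => by ring

end Kernel

section ExpPrimitive

open Polynomial

/-- The truncation `∑_{ν ≤ N} (-1/z)^ν T^{(ν)}(u) e^{zu}`: repeated integration by parts shows that
for `N ≥ deg T` it is `z` times a primitive of `T(u) e^{zu}` in the variable `u`. -/
noncomputable def expPrimitive (T : ℝ[X]) (N : ℕ) (z u : ℝ) : ℝ :=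
  ∑ ν ∈ Finset.range (N + 1), (-z⁻¹) ^ ν * Real.exp (z * u) * (derivative^[ν] T).eval u

theorem hasDerivAt_expPrimitive {T : ℝ[X]} {N : ℕ} (hT : derivative^[N + 1] T = 0) {z : ℝ}
    (hz : z ≠ 0) (u : ℝ) :
    HasDerivAt (expPrimitive T N z) (z * T.eval u * Real.exp (z * u)) u := by
  have hexp : HasDerivAt (fun u => Real.exp (z * u)) (Real.exp (z * u) * z) u := by
    simpa using ((hasDerivAt_id u).const_mul z).exp
  have hsum := HasDerivAt.fun_sum (u := Finset.range (N + 1)) fun ν _ =>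
    (hexp.const_mul ((-z⁻¹) ^ ν)).fun_mul ((derivative^[ν] T).hasDerivAt u)
  have htelescope := Finset.sum_range_sub
    (fun ν => (-z⁻¹) ^ ν * (derivative^[ν] T).eval u) (N + 1)
  simp only [hT, eval_zero, mul_zero, pow_zero, one_mul, Function.iterate_zero, id,
    zero_sub] at htelescope
  refine hsum.congr_deriv ?_
  rw [← neg_eq_iff_eq_neg.2 htelescope, mul_neg, Finset.mul_sum, neg_mul, Finset.sum_mul,
    ← Finset.sum_neg_distrib]
  refine Finset.sum_congr rfl fun ν _ => ?_
  rw [pow_succ, ← Function.iterate_succ_apply' derivative ν T]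
  field_simp
  ring

theorem contDiffAt_expPrimitive {T : ℝ[X]} {N : ℕ} {n : WithTop ℕ∞} {q : ℝ × ℝ} (hz : q.1 ≠ 0) :
    ContDiffAt ℝ n (fun q : ℝ × ℝ => expPrimitive T N q.1 q.2) q := by
  unfold expPrimitive
  refine ContDiffAt.sum fun ν _ => ?_
  have hpoly : ContDiff ℝ n fun u : ℝ => (derivative^[ν] T).eval u := by
    simpa using (derivative^[ν] T).contDiff_aeval (𝕜 := ℝ) n
  have hinv : ContDiffAt ℝ n (fun q : ℝ × ℝ => -q.1⁻¹) q := (contDiffAt_fst.inv hz).neg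
  exact ((hinv.pow ν).mul (by fun_prop)).mul (hpoly.comp contDiff_snd).contDiffAt

theorem hasDerivAt_neg_inv_pow_mul_exp (ν : ℕ) {z : ℝ} (hz : z ≠ 0) (u : ℝ) :
    HasDerivAt (fun z => (-z⁻¹) ^ ν * Real.exp (z * u))
      ((u - ν / z) * ((-z⁻¹) ^ ν * Real.exp (z * u))) z := by
  have hexp : HasDerivAt (fun z => Real.exp (z * u)) (Real.exp (z * u) * u) z := by
    simpa using ((hasDerivAt_id z).mul_const u).exp
  refine (((hasDerivAt_inv hz).fun_neg.fun_pow ν).fun_mul hexp).congr_deriv ?_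
  cases ν with
  | zero => simp [mul_comm]
  | succ ν =>
    rw [Nat.add_sub_cancel, pow_succ (-z⁻¹)]
    generalize (-z⁻¹) ^ ν = w
    push_cast
    field_simp
    ring

theorem hasDerivAt_sub_div_mul_neg_inv_pow_mul_exp (ν : ℕ) {z : ℝ} (hz : z ≠ 0) (u : ℝ) :
    HasDerivAt (fun z => (u - ν / z) * ((-z⁻¹) ^ ν * Real.exp (z * u)))
      ((ν / z ^ 2 + (u - ν / z) ^ 2) * ((-z⁻¹) ^ ν * Real.exp (z * u))) z := by
  have hcoeff : HasDerivAt (fun z => u - ν / z) (ν / z ^ 2) z := by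
    simpa [div_eq_mul_inv] using ((hasDerivAt_inv hz).const_mul (ν : ℝ)).const_sub u
  refine (hcoeff.fun_mul (hasDerivAt_neg_inv_pow_mul_exp ν hz u)).congr_deriv ?_
  ring

theorem sq_mul_deriv_deriv_add_mul_deriv_expPrimitive (T : ℝ[X]) (N : ℕ) {z : ℝ} (hz : z ≠ 0)
    (u : ℝ) :
    z ^ 2 * deriv (deriv fun z => expPrimitive T N z u) z +
        z * deriv (fun z => expPrimitive T N z u) z =
      ∑ ν ∈ Finset.range (N + 1),
        ((z * u - ν) ^ 2 + z * u) * ((-z⁻¹) ^ ν * (derivative^[ν] T).eval u) *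
          Real.exp (z * u) := by
  have hfirst {x : ℝ} (hx : x ≠ 0) := HasDerivAt.fun_sum (u := Finset.range (N + 1)) fun ν _ =>
    (hasDerivAt_neg_inv_pow_mul_exp ν hx u).mul_const ((derivative^[ν] T).eval u)
  have hsecond := HasDerivAt.fun_sum (u := Finset.range (N + 1)) fun ν _ =>
    (hasDerivAt_sub_div_mul_neg_inv_pow_mul_exp ν hz u).mul_const ((derivative^[ν] T).eval u)
  have hderiv : deriv (fun z => expPrimitive T N z u) =ᶠ[𝓝 z] _ :=
    (eventually_ne_nhds hz).mono fun x hx => (hfirst hx).deriv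
  rw [hderiv.deriv_eq, hderiv.eq_of_nhds, hsecond.deriv, Finset.mul_sum, Finset.mul_sum,
    ← Finset.sum_add_distrib]
  refine Finset.sum_congr rfl fun ν _ => ?_
  field_simp
  ring

theorem sum_mul_neg_inv_pow_mul_of_recurrence {K : Type*} [Field K] {P : ℕ → K} {c u z : K}
    (hz : z ≠ 0)
    (hP : ∀ ν, (1 - u ^ 2) * P (ν + 2) = (2 * ν + 1) * u * P (ν + 1) - (c - ν ^ 2) * P ν)
    {N : ℕ} (hN : P (N + 1) = 0) (hN' : P (N + 2) = 0) :
    ∑ ν ∈ Finset.range (N + 1), ((z * u - ν) ^ 2 + z * u - (c + z ^ 2)) * ((-z⁻¹) ^ ν * P ν) =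
      z * (u * P 0 + (1 - u ^ 2) * (P 1 - z * P 0)) := by
  obtain ⟨y, hy⟩ : ∃ y, y = -z⁻¹ := ⟨_, rfl⟩
  have hzy : z * y = -1 := by rw [hy, mul_neg, mul_inv_cancel₀ hz]
  have htelescope := Finset.sum_range_sub (fun ν : ℕ =>
    z ^ 2 * (1 - u ^ 2) * (y ^ ν * P ν + y ^ (ν + 1) * P (ν + 1)) +
      z * u * (2 * ν - 1) * (y ^ ν * P ν)) (N + 1)
  simp only [hN, hN', zero_add, pow_zero, pow_one, Nat.cast_zero, mul_zero, zero_sub, one_mul]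
    at htelescope
  rw [← hy, Finset.sum_congr rfl fun ν _ => ?_, htelescope]
  · linear_combination -z * (1 - u ^ 2) * P 1 * hzy
  · push_cast
    linear_combination -y ^ ν * hP ν - (1 - u ^ 2) * P (ν + 2) * y ^ ν * (z * y - 1) * hzy -
      (2 * ν + 1) * u * P (ν + 1) * y ^ ν * hzy

theorem bessel_operator_expPrimitive_chebyshev {n : ℤ} {N : ℕ}
    (hN : derivative^[N + 1] (Chebyshev.T ℝ n) = 0) {z : ℝ} (hz : z ≠ 0) (u : ℝ) :
    z ^ 2 * deriv (deriv fun z => expPrimitive (Chebyshev.T ℝ n) N z u) z +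
        z * deriv (fun z => expPrimitive (Chebyshev.T ℝ n) N z u) z =
      (n ^ 2 + z ^ 2) * expPrimitive (Chebyshev.T ℝ n) N z u +
        z * (u * (Chebyshev.T ℝ n).eval u + (1 - u ^ 2) *
          ((Chebyshev.T ℝ n).derivative.eval u - z * (Chebyshev.T ℝ n).eval u)) *
            Real.exp (z * u) := by
  have hN' : derivative^[N + 2] (Chebyshev.T ℝ n) = 0 := by
    rw [Function.iterate_succ_apply', hN, derivative_zero]
  have hsum := sum_mul_neg_inv_pow_mul_of_recurrence
    (P := fun ν => (derivative^[ν] (Chebyshev.T ℝ n)).eval u)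
    (c := (n : ℝ) ^ 2) (N := N) hz
    (fun ν => Chebyshev.one_sub_X_sq_mul_iterate_derivative_T_eval n ν u)
    (by simp only [hN, eval_zero]) (by simp only [hN', eval_zero])
  simp only [Function.iterate_zero, id, Function.iterate_one] at hsum
  rw [sq_mul_deriv_deriv_add_mul_deriv_expPrimitive _ _ hz, ← hsum, expPrimitive, Finset.mul_sum,
    Finset.sum_mul, ← Finset.sum_add_distrib]
  exact Finset.sum_congr rfl fun ν _ => by ring

/-- The building block `(r, φ) ↦ ∑_{ν ≤ N} (-1/(ρr))^ν T^{(ν)}(cos(φ - ϕ)) e^{⟨x, ξ⟩}`, for `x` and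
`ξ` with polar coordinates `(r, φ)` and `(ρ, ϕ)`. -/
noncomputable def polarExpPrimitive (T : ℝ[X]) (N : ℕ) (ρ ϕ : ℝ) (p : ℝ × ℝ) : ℝ :=
  expPrimitive T N (ρ * p.1) (Real.cos (p.2 - ϕ))

variable {N : ℕ} {ρ ϕ : ℝ} {p : ℝ × ℝ}

theorem contDiffAt_polarExpPrimitive {T : ℝ[X]} {n : WithTop ℕ∞} (hp : p.1 ≠ 0) (hρ : ρ ≠ 0) :
    ContDiffAt ℝ n (polarExpPrimitive T N ρ ϕ) p :=
  (contDiffAt_expPrimitive (q := (ρ * p.1, Real.cos (p.2 - ϕ))) (mul_ne_zero hρ hp)).comp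
    (f := fun p : ℝ × ℝ => (ρ * p.1, Real.cos (p.2 - ϕ))) p (by fun_prop)

theorem pdy_polarExpPrimitive {T : ℝ[X]} (hT : derivative^[N + 1] T = 0) (hp : p.1 ≠ 0)
    (hρ : ρ ≠ 0) :
    pdy (polarExpPrimitive T N ρ ϕ) p = ρ * p.1 * T.eval (Real.cos (p.2 - ϕ)) *
      Real.exp (ρ * p.1 * Real.cos (p.2 - ϕ)) * -Real.sin (p.2 - ϕ) :=
  ((hasDerivAt_expPrimitive hT (mul_ne_zero hρ hp) _).comp p.2
    (hasDerivAt_cos_sub_const ϕ p.2)).deriv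

theorem pdy_pdy_polarExpPrimitive {T : ℝ[X]} (hT : derivative^[N + 1] T = 0) (hp : p.1 ≠ 0)
    (hρ : ρ ≠ 0) :
    pdy (pdy (polarExpPrimitive T N ρ ϕ)) p = ρ * p.1 *
      (Real.sin (p.2 - ϕ) ^ 2 * (T.derivative.eval (Real.cos (p.2 - ϕ)) +
        ρ * p.1 * T.eval (Real.cos (p.2 - ϕ))) -
          Real.cos (p.2 - ϕ) * T.eval (Real.cos (p.2 - ϕ))) *
        Real.exp (ρ * p.1 * Real.cos (p.2 - ϕ)) := by
  have hcos := hasDerivAt_cos_sub_const ϕ p.2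
  have hsin : HasDerivAt (fun t => -Real.sin (t - ϕ)) (-Real.cos (p.2 - ϕ)) p.2 := by
    simpa using ((hasDerivAt_id p.2).sub_const ϕ).sin.fun_neg
  have hT' := ((T.hasDerivAt (Real.cos (p.2 - ϕ))).comp p.2 hcos).const_mul (ρ * p.1)
  have hproduct := (hT'.fun_mul (hcos.const_mul (ρ * p.1)).exp).fun_mul hsin
  have hfirst : (fun t => pdy (polarExpPrimitive T N ρ ϕ) (p.1, t)) = _ :=
    funext fun t => pdy_polarExpPrimitive (p := (p.1, t)) hT hp hρ
  rw [pdy, hfirst]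
  refine hproduct.deriv.trans ?_
  simp only [Function.comp_apply]
  ring

theorem polarLap_polarExpPrimitive_chebyshev {n : ℤ}
    (hN : derivative^[N + 1] (Chebyshev.T ℝ n) = 0) (hp : p.1 ≠ 0) (hρ : ρ ≠ 0) :
    polarLap (polarExpPrimitive (Chebyshev.T ℝ n) N ρ ϕ) p =
      (n ^ 2 / p.1 ^ 2 + ρ ^ 2) * polarExpPrimitive (Chebyshev.T ℝ n) N ρ ϕ p +
        2 * ρ / p.1 * Real.sin (p.2 - ϕ) ^ 2 *
          (Chebyshev.T ℝ n).derivative.eval (Real.cos (p.2 - ϕ)) *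
            Real.exp (ρ * p.1 * Real.cos (p.2 - ϕ)) := by
  have hbessel := bessel_operator_expPrimitive_chebyshev hN (mul_ne_zero hρ hp)
    (Real.cos (p.2 - ϕ))
  have hfirst (r : ℝ) : pdx (polarExpPrimitive (Chebyshev.T ℝ n) N ρ ϕ) (r, p.2) =
      ρ * deriv (fun z => expPrimitive (Chebyshev.T ℝ n) N z (Real.cos (p.2 - ϕ))) (ρ * r) :=
    deriv_comp_mul_left ρ (fun z => expPrimitive (Chebyshev.T ℝ n) N z (Real.cos (p.2 - ϕ))) r
  have hsecond : pdx (pdx (polarExpPrimitive (Chebyshev.T ℝ n) N ρ ϕ)) p = ρ * (ρ * deriv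
      (deriv fun z => expPrimitive (Chebyshev.T ℝ n) N z (Real.cos (p.2 - ϕ))) (ρ * p.1)) := by
    rw [pdx, funext hfirst, deriv_const_mul_field, deriv_comp_mul_left ρ, smul_eq_mul]
  rw [polarLap, hsecond, hfirst p.1, pdy_pdy_polarExpPrimitive hN hp hρ, Real.sin_sq,
    polarExpPrimitive]
  field_simp
  linear_combination hbessel

end ExpPrimitive

section BakerAkhiezer

variable {m : ℕ} {k : Fin (m + 1) → ℤ} {θ : Fin (m + 1) → ℝ} {ρ ϕ : ℝ} {p : ℝ × ℝ}

/-- The Baker–Akhiezer function `Ψ_BA(x, ξ)` as a function of the polar coordinates `p = (r, φ)` of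
`x`, for `ξ` with polar coordinates `(ρ, ϕ)`. -/
noncomputable def polarBakerAkhiezer (m : ℕ) (k : Fin (m + 1) → ℤ) (θ : Fin (m + 1) → ℝ)
    (ρ ϕ : ℝ) (p : ℝ × ℝ) : ℝ :=
  ∑ i, cF m k i * wronskDual (chiF m k θ) i ϕ * (wronskDual (chiF m k θ) i p.2 *
    polarExpPrimitive (Polynomial.Chebyshev.T ℝ (k i)) (k (Fin.last m)).toNat ρ ϕ p)

theorem wronskDual_chiF_mul_wronskDual_chiF (i : Fin (m + 1)) (t s : ℝ) :
    wronskDual (chiF m k θ) i t * wronskDual (chiF m k θ) i s =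
      PsiF m k θ i t * PsiF m k θ i s := by
  unfold wronskDual PsiF Wfn
  rw [mul_mul_mul_comm, ← mul_pow, neg_mul_neg, one_mul, one_pow, one_mul]

theorem sum_Ucoef_mul_exp_eq_polarBakerAkhiezer (m : ℕ) (k : Fin (m + 1) → ℤ)
    (θ : Fin (m + 1) → ℝ) (r φ ρ ϕ : ℝ) :
    (∑ ν ∈ Finset.range ((k (Fin.last m)).toNat + 1), (1 / 2 ^ ν : ℝ) * Ucoef m k θ ν r φ ρ ϕ) *
        Real.exp ((r * Real.cos φ) * (ρ * Real.cos ϕ) + (r * Real.sin φ) * (ρ * Real.sin ϕ)) =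
      polarBakerAkhiezer m k θ ρ ϕ (r, φ) := by
  have hinner : (r * Real.cos φ) * (ρ * Real.cos ϕ) + (r * Real.sin φ) * (ρ * Real.sin ϕ) =
      ρ * r * Real.cos (φ - ϕ) := by
    rw [Real.cos_sub]
    ring
  have hpow (ν : ℕ) : (1 / 2 ^ ν : ℝ) * ((-2) ^ ν / (r * ρ) ^ ν) = (-(ρ * r)⁻¹) ^ ν := by
    rw [← div_pow, ← one_div_pow, ← mul_pow]
    congr 1
    rw [div_eq_mul_inv (-2), mul_comm ρ]
    ring
  unfold polarBakerAkhiezer polarExpPrimitive expPrimitive Ucoef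
  rw [hinner]
  simp only [Finset.mul_sum, Finset.sum_mul]
  rw [Finset.sum_comm]
  refine Finset.sum_congr rfl fun i _ => Finset.sum_congr rfl fun ν _ => ?_
  have hψ := wronskDual_chiF_mul_wronskDual_chiF (k := k) (θ := θ) i φ ϕ
  rw [← hpow]
  linear_combination -cF m k i * ((1 / 2 ^ ν : ℝ) * ((-2) ^ ν / (r * ρ) ^ ν)) *
    (Polynomial.derivative^[ν] (Polynomial.Chebyshev.T ℝ (k i))).eval (Real.cos (φ - ϕ)) *
      Real.exp (ρ * r * Real.cos (φ - ϕ)) * hψ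

theorem iterate_derivative_chebyshev_T_eq_zero {R : Type*} [CommRing R] [IsDomain R]
    [NeZero (2 : R)] {n : ℤ} {N : ℕ} (hn : n.natAbs ≤ N) :
    Polynomial.derivative^[N + 1] (Polynomial.Chebyshev.T R n) = 0 :=
  Polynomial.iterate_derivative_eq_zero (by
    rw [Polynomial.Chebyshev.natDegree_T]
    exact Nat.lt_succ_of_le hn)

theorem natAbs_le_toNat_last (hk0 : k 0 = 0) (hk : Monotone k) (i : Fin (m + 1)) :
    (k i).natAbs ≤ (k (Fin.last m)).toNat := by
  have hnonneg : k 0 ≤ k i := hk (Fin.zero_le i)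
  have hle : k i ≤ k (Fin.last m) := hk (Fin.le_last i)
  omega

theorem contDiffAt_wronskDual_chiF {t : ℝ} (ht : Wfn m k θ t ≠ 0) (i : Fin (m + 1)) :
    ContDiffAt ℝ 2 (wronskDual (chiF m k θ) i) t :=
  contDiffAt_infty.1 (contDiffAt_wronskDual (contDiff_chiF m k θ) ht i) 2

theorem contDiffAt_wronskDual_chiF_mul_polarExpPrimitive {T : Polynomial ℝ} {N : ℕ}
    (hp : p.1 ≠ 0) (hρ : ρ ≠ 0) (hφ : Wfn m k θ p.2 ≠ 0) (i : Fin (m + 1)) :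
    ContDiffAt ℝ 2 (fun q => wronskDual (chiF m k θ) i q.2 * polarExpPrimitive T N ρ ϕ q) p :=
  ((contDiffAt_wronskDual_chiF hφ i).comp p contDiffAt_snd).mul (contDiffAt_polarExpPrimitive hp hρ)

theorem contDiffAt_polarBakerAkhiezer (hp : p.1 ≠ 0) (hρ : ρ ≠ 0) (hφ : Wfn m k θ p.2 ≠ 0) :
    ContDiffAt ℝ 2 (polarBakerAkhiezer m k θ ρ ϕ) p :=
  ContDiffAt.sum fun i _ => contDiffAt_const.mul
    (contDiffAt_wronskDual_chiF_mul_polarExpPrimitive hp hρ hφ i)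

theorem polarLap_wronskDual_chiF_mul_polarExpPrimitive {N : ℕ} {i : Fin (m + 1)}
    (hN : Polynomial.derivative^[N + 1] (Polynomial.Chebyshev.T ℝ (k i)) = 0)
    (hp : p.1 ≠ 0) (hρ : ρ ≠ 0) (hφ : Wfn m k θ p.2 ≠ 0) :
    polarLap (fun q => wronskDual (chiF m k θ) i q.2 *
        polarExpPrimitive (Polynomial.Chebyshev.T ℝ (k i)) N ρ ϕ q) p =
      (ρ ^ 2 + Vpot m k θ p.1 p.2) * (wronskDual (chiF m k θ) i p.2 *
        polarExpPrimitive (Polynomial.Chebyshev.T ℝ (k i)) N ρ ϕ p) -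
      2 * ρ / p.1 * Real.sin (p.2 - ϕ) * Real.exp (ρ * p.1 * Real.cos (p.2 - ϕ)) *
        (deriv (wronskDual (chiF m k θ) i) p.2 *
            (Polynomial.Chebyshev.T ℝ (k i)).eval (Real.cos (p.2 - ϕ)) -
          Real.sin (p.2 - ϕ) * wronskDual (chiF m k θ) i p.2 *
            (Polynomial.Chebyshev.T ℝ (k i)).derivative.eval (Real.cos (p.2 - ϕ))) := by
  have hcrum : deriv (deriv (wronskDual (chiF m k θ) i)) p.2 = (-(k i : ℝ) ^ 2 -
      2 * deriv (deriv fun t => Real.log (Wfn m k θ t)) p.2) * wronskDual (chiF m k θ) i p.2 :=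
    deriv_deriv_wronskDual (contDiff_chiF m k θ) (deriv_deriv_chiF m k θ) hφ i
  rw [polarLap_mul (contDiffAt_wronskDual_chiF hφ i) (contDiffAt_polarExpPrimitive hp hρ),
    polarLap_polarExpPrimitive_chebyshev hN hp hρ, pdy_polarExpPrimitive hN hp hρ, hcrum, Vpot]
  field_simp
  ring

theorem polarLap_polarBakerAkhiezer (hk0 : k 0 = 0) (hk : StrictMono k) (hθ0 : θ 0 = 0)
    (hp : p.1 ≠ 0) (hρ : ρ ≠ 0) (hφ : Wfn m k θ p.2 ≠ 0) (hϕ : Wfn m k θ ϕ ≠ 0) :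
    polarLap (polarBakerAkhiezer m k θ ρ ϕ) p =
      (ρ ^ 2 + Vpot m k θ p.1 p.2) * polarBakerAkhiezer m k θ ρ ϕ p := by
  have hterm (i : Fin (m + 1)) := polarLap_wronskDual_chiF_mul_polarExpPrimitive (ϕ := ϕ)
    (iterate_derivative_chebyshev_T_eq_zero (natAbs_le_toNat_last hk0 hk.monotone i)) hp hρ hφ
  have hcancel := congrArg
    (2 * ρ / p.1 * Real.sin (p.2 - ϕ) * Real.exp (ρ * p.1 * Real.cos (p.2 - ϕ)) * ·)
    (sum_cF_mul_deriv_wronskDual hk0 hk hθ0 hφ hϕ)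
  simp only [Finset.mul_sum, mul_zero] at hcancel
  unfold polarBakerAkhiezer
  rw [polarLap_sum fun i _ => contDiffAt_const.mul
    (contDiffAt_wronskDual_chiF_mul_polarExpPrimitive hp hρ hφ i), Finset.mul_sum,
    ← sub_eq_zero, ← neg_eq_zero, ← hcancel, ← Finset.sum_sub_distrib, ← Finset.sum_neg_distrib]
  refine Finset.sum_congr rfl fun i _ => ?_
  rw [polarLap_const_mul, hterm]
  ring

end BakerAkhiezer

/-- **Theorem 3 (Baker–Akhiezer function).** The function
`Ψ_BA(x, ξ) = (∑_{ν=0}^{k_m} 2^{−ν} U_ν(x, ξ)) e^{⟨x, ξ⟩}` satisfies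
`−Δ_x Ψ_BA + V_k(x) Ψ_BA = −|ξ|² Ψ_BA`. -/
theorem baker_akhiezer (m : ℕ) (hm : 1 ≤ m)
    (k : Fin (m + 1) → ℤ) (hk0 : k 0 = 0) (hk : StrictMono k)
    (θ : Fin (m + 1) → ℝ) (hθ0 : θ 0 = 0)
    (Ψ : ℝ × ℝ → ℝ × ℝ → ℝ) (V : ℝ × ℝ → ℝ)
    (hΨ : ∀ (r φ ρ ϕ : ℝ), 0 < r → 0 < ρ →
      Wfn m k θ φ ≠ 0 → Wfn m k θ ϕ ≠ 0 →
      Ψ (r * Real.cos φ, r * Real.sin φ) (ρ * Real.cos ϕ, ρ * Real.sin ϕ)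
        = (∑ ν ∈ Finset.range ((k (Fin.last m)).toNat + 1),
            (1 / 2 ^ ν : ℝ) * Ucoef m k θ ν r φ ρ ϕ) *
          Real.exp ((r * Real.cos φ) * (ρ * Real.cos ϕ) +
            (r * Real.sin φ) * (ρ * Real.sin ϕ)))
    (hV : ∀ (r φ : ℝ), 0 < r → Wfn m k θ φ ≠ 0 →
      V (r * Real.cos φ, r * Real.sin φ) = Vpot m k θ r φ) :
    ∀ (r φ ρ ϕ : ℝ), 0 < r → 0 < ρ → Wfn m k θ φ ≠ 0 → Wfn m k θ ϕ ≠ 0 →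
      -lap2 (fun y => Ψ y (ρ * Real.cos ϕ, ρ * Real.sin ϕ))
          (r * Real.cos φ, r * Real.sin φ) +
        V (r * Real.cos φ, r * Real.sin φ) *
          Ψ (r * Real.cos φ, r * Real.sin φ) (ρ * Real.cos ϕ, ρ * Real.sin ϕ)
      = -((ρ * Real.cos ϕ) ^ 2 + (ρ * Real.sin ϕ) ^ 2) *
          Ψ (r * Real.cos φ, r * Real.sin φ) (ρ * Real.cos ϕ, ρ * Real.sin ϕ) := by
  intro r φ ρ ϕ hr hρ hφ hϕ
  have hΨpolar {r φ : ℝ} (hr : 0 < r) (hφ : Wfn m k θ φ ≠ 0) :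
      Ψ (r * Real.cos φ, r * Real.sin φ) (ρ * Real.cos ϕ, ρ * Real.sin ϕ) =
        polarBakerAkhiezer m k θ ρ ϕ (r, φ) := by
    rw [hΨ r φ ρ ϕ hr hρ hφ hϕ, sum_Ucoef_mul_exp_eq_polarBakerAkhiezer]
  have hnear : (fun y => Ψ y (ρ * Real.cos ϕ, ρ * Real.sin ϕ)) ∘ polarCoord.symm =ᶠ[𝓝 (r, φ)]
      polarBakerAkhiezer m k θ ρ ϕ := by
    filter_upwards [continuousAt_fst.eventually (lt_mem_nhds hr),
      continuousAt_snd.eventually (eventually_wronsk_ne_zero (contDiff_chiF m k θ) hφ)]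
      with p hp hWp using hΨpolar hp hWp
  have hlap : lap2 (fun y => Ψ y (ρ * Real.cos ϕ, ρ * Real.sin ϕ))
      (r * Real.cos φ, r * Real.sin φ) = polarLap (polarBakerAkhiezer m k θ ρ ϕ) (r, φ) :=
    lap2_eq_polarLap (p := (r, φ)) hr.ne' (contDiffAt_polarBakerAkhiezer hr.ne' hρ.ne' hφ) hnear
  rw [hlap, polarLap_polarBakerAkhiezer hk0 hk hθ0 hr.ne' hρ.ne' hφ hϕ, hΨpolar hr hφ,
    hV r φ hr hφ]
  linear_combination ρ ^ 2 * polarBakerAkhiezer m k θ ρ ϕ (r, φ) * Real.cos_sq_add_sin_sq ϕ
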